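/- Let σ_1,…,σ_n : Ω → H be a (k+1)-nondegenerate holomorphic frame, k ≥ 1, with the conventions det J_{−1}h := 1 and h_0 := J_0 h. Define the n×n matrix Q_k(z) := (det J_{k−1}h(z))⁻¹ · h_k(z) (the metric of the quotient bundle J_k(E)/J_{k−1}(E)). Then for every z ∈ Ω, (det J_k h(z))⁻¹·det(J_{k−1}h(z))·h_k(z)⁻¹·h_{k+1}(z) − (det J_{k−1}h(z))⁻¹·det(J_{k−2}h(z))·h_{k−1}(z)⁻¹·h_k(z) = ∂/∂z̄ ( Q_k⁻¹ · ∂Q_k/∂z )(z); that is, (trace⊗Id_{n×n})(𝒦_{J_k(E_f)}) − (trace⊗Id_{n×n})(𝒦_{J_{k−1}(E_f)}) = 𝒦_{J_k(E_f)/J_{k−1}(E_f)}, where (trace⊗Id_{n×n}) of a (k+1)n×(k+1)n matrix written in n×n blocks is the sum of its diagonal blocks. -/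

import Mathlib

open Matrix

noncomputable section

/-- Wirtinger derivative `∂g/∂z := (1/2)(∂g/∂x − i·∂g/∂y)`. -/
def Dz {E : Type*} [NormedAddCommGroup E] [NormedSpace ℂ E] (g : ℂ → E) (z : ℂ) : E :=
  (1 / 2 : ℂ) • (fderiv ℝ g z 1 - Complex.I • fderiv ℝ g z Complex.I)

/-- Wirtinger derivative `∂g/∂z̄ := (1/2)(∂g/∂x + i·∂g/∂y)`. -/
def Dzbar {E : Type*} [NormedAddCommGroup E] [NormedSpace ℂ E] (g : ℂ → E) (z : ℂ) : E :=
  (1 / 2 : ℂ) • (fderiv ℝ g z 1 + Complex.I • fderiv ℝ g z Complex.I)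

/-- Entrywise Wirtinger derivative `∂/∂z` of a matrix-valued function. -/
def mDz {ι : Type*} (M : ℂ → Matrix ι ι ℂ) (z : ℂ) : Matrix ι ι ℂ :=
  Matrix.of fun i j => Dz (fun w => M w i j) z

/-- Entrywise Wirtinger derivative `∂/∂z̄` of a matrix-valued function. -/
def mDzbar {ι : Type*} (M : ℂ → Matrix ι ι ℂ) (z : ℂ) : Matrix ι ι ℂ :=
  Matrix.of fun i j => Dzbar (fun w => M w i j) z

variable {H : Type*} [NormedAddCommGroup H] [InnerProductSpace ℂ H] [CompleteSpace H]

/-- `⟪x, y⟫` is the Mathlib inner product (conjugate-linear in the first argument);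
it equals the paper's inner product `⟨y, x⟩`, which is linear in the first argument. -/
local notation "⟪" x ", " y "⟫" => (inner ℂ x y : ℂ)

/-- `jGram σ N z` is the Gram matrix of the family
`(σ_1(z),…,σ_n(z), σ_1′(z),…,σ_n′(z),…,σ_1^{(N−1)}(z),…,σ_n^{(N−1)}(z))`, with `(a,b)` entry
equal to `⟨b-th vector, a-th vector⟩_paper = ⟪a-th vector, b-th vector⟫`.  The jet Gram matrix
`J_k h` of the paper is `jGram σ (k+1)`. -/
def jGram {n : ℕ} (σ : Fin n → ℂ → H) (N : ℕ) (z : ℂ) :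
    Matrix (Fin N × Fin n) (Fin N × Fin n) ℂ :=
  Matrix.of fun p q =>
    ⟪iteratedDeriv (p.1 : ℕ) (σ p.2) z, iteratedDeriv (q.1 : ℕ) (σ q.2) z⟫

/-- `hMat σ m z` is the paper's matrix `h_m(z)`: its `(i,j)` entry is the determinant of the
`(nm+1)×(nm+1)` matrix whose `(a,b)` entry is `⟨u_b, v_a⟩_paper = ⟪v_a, u_b⟫`, where
`u` is the family `(σ_1(z),…,σ_n^{(m−1)}(z))` followed by `σ_j^{(m)}(z)` and `v` is the same
family followed by `σ_i^{(m)}(z)`.  (For `m = 0` this is the Gram matrix `h_0 = J_0 h`.) -/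
def hMat {n : ℕ} (σ : Fin n → ℂ → H) (m : ℕ) (z : ℂ) : Matrix (Fin n) (Fin n) ℂ :=
  Matrix.of fun i j =>
    (Matrix.of fun a b : (Fin m × Fin n) ⊕ Unit =>
      ⟪Sum.elim (fun lp : Fin m × Fin n => iteratedDeriv (lp.1 : ℕ) (σ lp.2) z)
          (fun _ => iteratedDeriv m (σ i) z) a,
        Sum.elim (fun lp : Fin m × Fin n => iteratedDeriv (lp.1 : ℕ) (σ lp.2) z)
          (fun _ => iteratedDeriv m (σ j) z) b⟫).det

section Wirtinger

variable {E : Type*} [NormedAddCommGroup E] [NormedSpace ℂ E] {f g : ℂ → E} {c : ℂ → ℂ} {z : ℂ}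

theorem Filter.EventuallyEq.Dz_eq (h : f =ᶠ[nhds z] g) : Dz f z = Dz g z := by
  simp only [Dz, h.fderiv_eq]

theorem Filter.EventuallyEq.Dzbar_eq (h : f =ᶠ[nhds z] g) : Dzbar f z = Dzbar g z := by
  simp only [Dzbar, h.fderiv_eq]

theorem Dzbar_zero : Dzbar (fun _ => (0 : E)) z = 0 := by
  simp [Dzbar]

theorem Dz_fun_sub (hf : DifferentiableAt ℝ f z) (hg : DifferentiableAt ℝ g z) :
    Dz (fun w => f w - g w) z = Dz f z - Dz g z := by
  simp only [Dz, fderiv_fun_sub hf hg, _root_.sub_apply]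
  module

theorem Dzbar_fun_sub (hf : DifferentiableAt ℝ f z) (hg : DifferentiableAt ℝ g z) :
    Dzbar (fun w => f w - g w) z = Dzbar f z - Dzbar g z := by
  simp only [Dzbar, fderiv_fun_sub hf hg, _root_.sub_apply]
  module

theorem Dz_fun_sum {ι : Type*} [Fintype ι] {F : ι → ℂ → E}
    (hF : ∀ i, DifferentiableAt ℝ (F i) z) :
    Dz (fun w => ∑ i, F i w) z = ∑ i, Dz (F i) z := by
  simp only [Dz, fderiv_fun_sum fun i _ => hF i, _root_.sum_apply, Finset.smul_sum,
    ← Finset.sum_sub_distrib]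

theorem Dzbar_fun_sum {ι : Type*} [Fintype ι] {F : ι → ℂ → E}
    (hF : ∀ i, DifferentiableAt ℝ (F i) z) :
    Dzbar (fun w => ∑ i, F i w) z = ∑ i, Dzbar (F i) z := by
  simp only [Dzbar, fderiv_fun_sum fun i _ => hF i, _root_.sum_apply,
    Finset.smul_sum, ← Finset.sum_add_distrib]

theorem Dz_fun_smul (hc : DifferentiableAt ℝ c z) (hf : DifferentiableAt ℝ f z) :
    Dz (fun w => c w • f w) z = Dz c z • f z + c z • Dz f z := by
  simp only [Dz, fderiv_fun_smul hc hf, _root_.add_apply,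
    _root_.smul_apply, ContinuousLinearMap.smulRight_apply, smul_eq_mul]
  module

theorem Dzbar_fun_smul (hc : DifferentiableAt ℝ c z) (hf : DifferentiableAt ℝ f z) :
    Dzbar (fun w => c w • f w) z = Dzbar c z • f z + c z • Dzbar f z := by
  simp only [Dzbar, fderiv_fun_smul hc hf, _root_.add_apply,
    _root_.smul_apply, ContinuousLinearMap.smulRight_apply, smul_eq_mul]
  module

theorem DifferentiableAt.fderiv_real_apply (hf : DifferentiableAt ℂ f z) (v : ℂ) :
    fderiv ℝ f z v = v • deriv f z := by
  rw [(hf.hasFDerivAt.restrictScalars ℝ).fderiv, ContinuousLinearMap.coe_restrictScalars',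
    fderiv_eq_smul_deriv]

theorem DifferentiableAt.Dz_eq_deriv (hf : DifferentiableAt ℂ f z) : Dz f z = deriv f z := by
  simp only [Dz, hf.fderiv_real_apply, smul_smul, Complex.I_mul_I]
  module

theorem DifferentiableAt.Dzbar_eq_zero (hf : DifferentiableAt ℂ f z) : Dzbar f z = 0 := by
  simp only [Dzbar, hf.fderiv_real_apply, smul_smul, Complex.I_mul_I]
  module

end Wirtinger

section WirtingerInner

variable {V : Type*} [NormedAddCommGroup V] [InnerProductSpace ℂ V] {f g : ℂ → V} {z : ℂ}

theorem Dz_inner (hf : DifferentiableAt ℝ f z) (hg : DifferentiableAt ℝ g z) :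
    Dz (fun w => ⟪f w, g w⟫) z = ⟪Dzbar f z, g z⟫ + ⟪f z, Dz g z⟫ := by
  simp only [Dz, Dzbar, fderiv_inner_apply ℂ hf hg, inner_smul_left, inner_smul_right,
    inner_add_left, inner_sub_right, smul_eq_mul, map_div₀, map_one, map_ofNat, Complex.conj_I]
  ring

theorem Dzbar_inner (hf : DifferentiableAt ℝ f z) (hg : DifferentiableAt ℝ g z) :
    Dzbar (fun w => ⟪f w, g w⟫) z = ⟪Dz f z, g z⟫ + ⟪f z, Dzbar g z⟫ := by
  simp only [Dz, Dzbar, fderiv_inner_apply ℂ hf hg, inner_smul_left, inner_smul_right,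
    inner_sub_left, inner_add_right, smul_eq_mul, map_div₀, map_one, map_ofNat, Complex.conj_I]
  ring

end WirtingerInner

section MatrixCalculus

variable {ι : Type*} [Fintype ι] [DecidableEq ι] {M : ℂ → Matrix ι ι ℂ} {z : ℂ}

theorem DifferentiableAt.matrix_det_real (hM : ∀ i j, DifferentiableAt ℝ (fun w => M w i j) z) :
    DifferentiableAt ℝ (fun w => (M w).det) z := by
  simp only [Matrix.det_apply']
  exact DifferentiableAt.fun_sum fun τ _ =>
    (HasFDerivAt.finsetProd fun i _ => (hM _ _).hasFDerivAt).differentiableAt.const_mul _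

theorem DifferentiableAt.matrix_inv_real (hM : ∀ i j, DifferentiableAt ℝ (fun w => M w i j) z)
    (hz : (M z).det ≠ 0) (i j : ι) : DifferentiableAt ℝ (fun w => (M w)⁻¹ i j) z := by
  simp only [Matrix.inv_def, Ring.inverse_eq_inv', Matrix.smul_apply, smul_eq_mul,
    Matrix.adjugate_apply]
  refine ((DifferentiableAt.matrix_det_real hM).inv hz).mul
    (DifferentiableAt.matrix_det_real fun a b => ?_)
  by_cases ha : a = j
  · subst ha
    simp only [Matrix.updateRow_self]
    exact differentiableAt_const _
  · simp only [Matrix.updateRow_ne ha]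
    exact hM a b

end MatrixCalculus

section Jets

variable {V : Type*} [NormedAddCommGroup V] [InnerProductSpace ℂ V] {n : ℕ}
  {σ : Fin n → ℂ → V}

/-- The Gram block pairing the derivatives of order less than `m` with those of order `m`. -/
def jetCross (σ : Fin n → ℂ → V) (m : ℕ) (z : ℂ) : Matrix (Fin m × Fin n) (Fin n) ℂ :=
  Matrix.of fun p j => ⟪iteratedDeriv p.1 (σ p.2) z, iteratedDeriv m (σ j) z⟫

/-- Coefficients of the orthogonal projections of `σ_1^{(m)}(z),…,σ_n^{(m)}(z)` onto the span of
the derivatives of order less than `m`. -/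
def jetCoeff (σ : Fin n → ℂ → V) (m : ℕ) (z : ℂ) : Matrix (Fin m × Fin n) (Fin n) ℂ :=
  (jGram σ m z)⁻¹ * jetCross σ m z

/-- The component of `σ_j^{(m)}(z)` orthogonal to the derivatives of order less than `m`. -/
def jetPerp (σ : Fin n → ℂ → V) (m : ℕ) (j : Fin n) (z : ℂ) : V :=
  iteratedDeriv m (σ j) z - ∑ p, jetCoeff σ m z p j • iteratedDeriv p.1 (σ p.2) z

/-- The Schur complement of `jGram σ m z` in `jGram σ (m + 1) z`. -/
def jetSchur (σ : Fin n → ℂ → V) (m : ℕ) (z : ℂ) : Matrix (Fin n) (Fin n) ℂ :=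
  Matrix.of fun i j => ⟪iteratedDeriv m (σ i) z, jetPerp σ m j z⟫

/-- The block of `jetCoeff σ (m + 1) z` formed by the coefficients of the derivatives of
order `m`. -/
def jetTop (σ : Fin n → ℂ → V) (m : ℕ) (z : ℂ) : Matrix (Fin n) (Fin n) ℂ :=
  (jetCoeff σ (m + 1) z).submatrix (fun i => (Fin.last m, i)) id

section Algebra

variable {m : ℕ} {z : ℂ}

theorem inner_jetPerp_of_lt (hz : (jGram σ m z).det ≠ 0) {r : ℕ} (hr : r < m) (i j : Fin n) :
    ⟪iteratedDeriv r (σ i) z, jetPerp σ m j z⟫ = 0 := by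
  have h : jGram σ m z * jetCoeff σ m z = jetCross σ m z := by
    rw [jetCoeff, Matrix.mul_nonsing_inv_cancel_left _ _ (isUnit_iff_ne_zero.2 hz)]
  have h' := congrFun (congrFun h (⟨r, hr⟩, i)) j
  simp only [Matrix.mul_apply, jGram, jetCross, Matrix.of_apply] at h'
  simp only [jetPerp, inner_sub_right, inner_sum, inner_smul_right, ← h', mul_comm, sub_self]

theorem jetPerp_inner_of_lt (hz : (jGram σ m z).det ≠ 0) {r : ℕ} (hr : r < m) (i j : Fin n) :
    ⟪jetPerp σ m j z, iteratedDeriv r (σ i) z⟫ = 0 := by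
  rw [← inner_conj_symm, inner_jetPerp_of_lt hz hr, map_zero]

theorem inner_jetPerp_jetPerp (hz : (jGram σ m z).det ≠ 0) (i j : Fin n) :
    ⟪jetPerp σ m i z, jetPerp σ m j z⟫ = jetSchur σ m z i j := by
  nth_rw 1 [jetPerp]
  rw [inner_sub_left, sum_inner, Finset.sum_eq_zero, sub_zero, jetSchur, Matrix.of_apply]
  intro p _
  rw [inner_smul_left, inner_jetPerp_of_lt hz p.1.2, mul_zero]

theorem jetPerp_inner_iteratedDeriv (hz : (jGram σ m z).det ≠ 0) (i j : Fin n) :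
    ⟪jetPerp σ m i z, iteratedDeriv m (σ j) z⟫ = jetSchur σ m z i j := by
  rw [← inner_jetPerp_jetPerp hz]
  nth_rw 3 [jetPerp]
  rw [inner_sub_right, inner_sum, Finset.sum_eq_zero, sub_zero]
  intro p _
  rw [inner_smul_right, jetPerp_inner_of_lt hz p.1.2, mul_zero]

theorem jetPerp_inner_sum_smul (hz : (jGram σ m z).det ≠ 0) (i : Fin n)
    (c : Fin (m + 1) × Fin n → ℂ) :
    ⟪jetPerp σ m i z, ∑ p, c p • iteratedDeriv p.1 (σ p.2) z⟫ =
      ∑ l, jetSchur σ m z i l * c (Fin.last m, l) := by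
  simp only [Fintype.sum_prod_type, Fin.sum_univ_castSucc, inner_add_right, inner_sum,
    inner_smul_right, Fin.val_castSucc, Fin.val_last, jetPerp_inner_iteratedDeriv hz]
  simp [jetPerp_inner_of_lt hz, mul_comm]

theorem jetSchur_apply (i j : Fin n) :
    jetSchur σ m z i j = ⟪iteratedDeriv m (σ i) z, iteratedDeriv m (σ j) z⟫ -
      ∑ p : Fin m × Fin n, ∑ q : Fin m × Fin n,
        ⟪iteratedDeriv m (σ i) z, iteratedDeriv q.1 (σ q.2) z⟫ * (jGram σ m z)⁻¹ q p *
          ⟪iteratedDeriv p.1 (σ p.2) z, iteratedDeriv m (σ j) z⟫ := by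
  rw [Finset.sum_comm]
  simp only [jetSchur, jetPerp, jetCoeff, jetCross, Matrix.of_apply, inner_sub_right, inner_sum,
    inner_smul_right, Matrix.mul_apply, Finset.sum_mul]
  congr 1
  exact Finset.sum_congr rfl fun p _ => Finset.sum_congr rfl fun q _ => by ring

theorem hMat_eq_smul_jetSchur (hz : (jGram σ m z).det ≠ 0) :
    hMat σ m z = (jGram σ m z).det • jetSchur σ m z := by
  ext i j
  let := (jGram σ m z).invertibleOfIsUnitDet (isUnit_iff_ne_zero.2 hz)
  have h := Matrix.det_fromBlocks₁₁ (jGram σ m z)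
    (Matrix.of fun p (_ : Unit) => ⟪iteratedDeriv p.1 (σ p.2) z, iteratedDeriv m (σ j) z⟫)
    (Matrix.of fun (_ : Unit) p => ⟪iteratedDeriv m (σ i) z, iteratedDeriv p.1 (σ p.2) z⟫)
    (Matrix.of fun (_ _ : Unit) => ⟪iteratedDeriv m (σ i) z, iteratedDeriv m (σ j) z⟫)
  rw [Matrix.smul_apply, smul_eq_mul, jetSchur_apply]
  convert h using 1
  · simp only [hMat, Matrix.of_apply]
    congr 1
    ext (a | a) (b | b) <;> simp [jGram]
  · simp [Matrix.mul_apply, Finset.sum_mul, Matrix.det_unique]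

theorem det_jGram_succ (hz : (jGram σ m z).det ≠ 0) :
    (jGram σ (m + 1) z).det = (jGram σ m z).det * (jetSchur σ m z).det := by
  let := (jGram σ m z).invertibleOfIsUnitDet (isUnit_iff_ne_zero.2 hz)
  have h := Matrix.det_fromBlocks₁₁ (jGram σ m z)
    (jetCross σ m z)
    (Matrix.of fun i p => ⟪iteratedDeriv m (σ i) z, iteratedDeriv p.1 (σ p.2) z⟫)
    (Matrix.of fun i j => ⟪iteratedDeriv m (σ i) z, iteratedDeriv m (σ j) z⟫)
  let e : (Fin m × Fin n) ⊕ Fin n → Fin (m + 1) × Fin n :=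
    Sum.elim (fun p => (p.1.castSucc, p.2)) fun i => (Fin.last m, i)
  have he : Function.Bijective e := by
    constructor
    · rintro (⟨a, b⟩ | a) (⟨c, d⟩ | c) <;>
        simp [e, Fin.castSucc_ne_last, (Fin.castSucc_ne_last _).symm]
    · rintro ⟨r, i⟩
      induction r using Fin.lastCases with
      | last => exact ⟨Sum.inr i, rfl⟩
      | cast r => exact ⟨Sum.inl (r, i), rfl⟩
  rw [← Matrix.det_submatrix_equiv_self (Equiv.ofBijective e he)]
  convert h using 2
  · ext (a | a) (b | b) <;> simp [jGram, jetCross, e]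
  · congr 1
    ext i j
    rw [jetSchur_apply]
    simp [jetCross, Matrix.mul_apply, Finset.sum_mul]

theorem det_jGram_ne_zero_of_le {N : ℕ} (hmN : m ≤ N)
    (h : LinearIndependent ℂ fun p : Fin N × Fin n => iteratedDeriv (p.1 : ℕ) (σ p.2) z) :
    (jGram σ m z).det ≠ 0 := by
  have h' := h.comp (fun p : Fin m × Fin n => (Fin.castLE hmN p.1, p.2)) (by
    rintro ⟨a, b⟩ ⟨c, d⟩ hab
    simpa using hab)
  exact Matrix.det_gram_ne_zero_iff_linearIndependent.2 h'

theorem det_jetSchur_ne_zero (hz : (jGram σ m z).det ≠ 0) (hz' : (jGram σ (m + 1) z).det ≠ 0) :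
    (jetSchur σ m z).det ≠ 0 :=
  right_ne_zero_of_mul (det_jGram_succ hz ▸ hz')

theorem smul_inv_hMat_mul_hMat_succ (hz : (jGram σ m z).det ≠ 0)
    (hz' : (jGram σ (m + 1) z).det ≠ 0) :
    ((jGram σ (m + 1) z).det⁻¹ * (jGram σ m z).det) • ((hMat σ m z)⁻¹ * hMat σ (m + 1) z) =
      (jetSchur σ m z)⁻¹ * jetSchur σ (m + 1) z := by
  let := invertibleOfNonzero hz
  rw [hMat_eq_smul_jetSchur hz, hMat_eq_smul_jetSchur hz',
    Matrix.inv_smul _ _ (isUnit_iff_ne_zero.2 (det_jetSchur_ne_zero hz hz')), invOf_eq_inv,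
    Matrix.smul_mul, Matrix.mul_smul, smul_smul, smul_smul]
  field_simp
  exact one_smul _ _

end Algebra

section Calculus

variable [CompleteSpace V] {Ω : Set ℂ} {m : ℕ} {z : ℂ}

theorem differentiableAt_iteratedDeriv (hΩ : IsOpen Ω) {f : ℂ → V} (hf : DifferentiableOn ℂ f Ω)
    (m : ℕ) (hz : z ∈ Ω) : DifferentiableAt ℂ (iteratedDeriv m f) z := by
  have h : DifferentiableOn ℂ (iteratedDeriv m f) Ω := by
    induction m with
    | zero => simpa using hf
    | succ m ih => simpa only [iteratedDeriv_succ] using ih.deriv hΩ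
  exact h.differentiableAt (hΩ.mem_nhds hz)

theorem Dz_iteratedDeriv (hΩ : IsOpen Ω) {f : ℂ → V} (hf : DifferentiableOn ℂ f Ω)
    (m : ℕ) (hz : z ∈ Ω) : Dz (iteratedDeriv m f) z = iteratedDeriv (m + 1) f z := by
  rw [(differentiableAt_iteratedDeriv hΩ hf m hz).Dz_eq_deriv, iteratedDeriv_succ]

theorem differentiableAt_jetCoeff (hΩ : IsOpen Ω) (hσ : ∀ i, DifferentiableOn ℂ (σ i) Ω)
    (hz : z ∈ Ω) (hd : (jGram σ m z).det ≠ 0) (p : Fin m × Fin n)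
    (j : Fin n) : DifferentiableAt ℝ (fun w => jetCoeff σ m w p j) z := by
  have hin (r s : ℕ) (i l : Fin n) :
      DifferentiableAt ℝ (fun w => ⟪iteratedDeriv r (σ i) w, iteratedDeriv s (σ l) w⟫) z :=
    ((differentiableAt_iteratedDeriv hΩ (hσ i) r hz).restrictScalars ℝ).inner ℂ
      ((differentiableAt_iteratedDeriv hΩ (hσ l) s hz).restrictScalars ℝ)
  simp only [jetCoeff, jetCross, Matrix.mul_apply, Matrix.of_apply]
  exact DifferentiableAt.fun_sum fun q _ =>
    (DifferentiableAt.matrix_inv_real (fun _ _ => hin _ _ _ _) hd p q).mul (hin _ _ _ _)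

theorem differentiableAt_jetCoeff_smul (hΩ : IsOpen Ω) (hσ : ∀ i, DifferentiableOn ℂ (σ i) Ω)
    (hz : z ∈ Ω) (hd : (jGram σ m z).det ≠ 0)
    (p : Fin m × Fin n) (j : Fin n) :
    DifferentiableAt ℝ (fun w => jetCoeff σ m w p j • iteratedDeriv p.1 (σ p.2) w) z :=
  (differentiableAt_jetCoeff hΩ hσ hz hd p j).smul
    ((differentiableAt_iteratedDeriv hΩ (hσ p.2) p.1 hz).restrictScalars ℝ)

theorem differentiableAt_jetPerp (hΩ : IsOpen Ω) (hσ : ∀ i, DifferentiableOn ℂ (σ i) Ω)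
    (hz : z ∈ Ω) (hd : (jGram σ m z).det ≠ 0) (j : Fin n) :
    DifferentiableAt ℝ (jetPerp σ m j) z :=
  ((differentiableAt_iteratedDeriv hΩ (hσ j) m hz).restrictScalars ℝ).fun_sub
    (DifferentiableAt.fun_sum fun p _ => differentiableAt_jetCoeff_smul hΩ hσ hz hd p j)

theorem Dzbar_jetPerp (hΩ : IsOpen Ω) (hσ : ∀ i, DifferentiableOn ℂ (σ i) Ω)
    (hz : z ∈ Ω) (hd : (jGram σ m z).det ≠ 0) (j : Fin n) :
    Dzbar (jetPerp σ m j) z =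
      -∑ p, Dzbar (fun w => jetCoeff σ m w p j) z • iteratedDeriv p.1 (σ p.2) z := by
  have hsm := fun p => differentiableAt_jetCoeff_smul hΩ hσ hz hd p j
  have hit := fun r i => differentiableAt_iteratedDeriv hΩ (hσ i) r hz
  have h : Dzbar (jetPerp σ m j) z = _ :=
    Dzbar_fun_sub ((hit m j).restrictScalars ℝ) (DifferentiableAt.fun_sum fun p _ => hsm p)
  rw [h, (hit m j).Dzbar_eq_zero, zero_sub, Dzbar_fun_sum hsm]
  congr 1
  refine Finset.sum_congr rfl fun p _ => ?_
  rw [Dzbar_fun_smul (differentiableAt_jetCoeff hΩ hσ hz hd p j)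
    ((hit p.1 p.2).restrictScalars ℝ), (hit p.1 p.2).Dzbar_eq_zero, smul_zero, add_zero]

theorem Dz_jetPerp (hΩ : IsOpen Ω) (hσ : ∀ i, DifferentiableOn ℂ (σ i) Ω)
    (hz : z ∈ Ω) (hd : (jGram σ m z).det ≠ 0) (j : Fin n) :
    Dz (jetPerp σ m j) z = iteratedDeriv (m + 1) (σ j) z -
      (∑ p, Dz (fun w => jetCoeff σ m w p j) z • iteratedDeriv p.1 (σ p.2) z +
        ∑ p, jetCoeff σ m z p j • iteratedDeriv (p.1 + 1) (σ p.2) z) := by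
  have hsm := fun p => differentiableAt_jetCoeff_smul hΩ hσ hz hd p j
  have hit := fun r i => differentiableAt_iteratedDeriv hΩ (hσ i) r hz
  have h : Dz (jetPerp σ m j) z = _ :=
    Dz_fun_sub ((hit m j).restrictScalars ℝ) (DifferentiableAt.fun_sum fun p _ => hsm p)
  rw [h, Dz_iteratedDeriv hΩ (hσ j) m hz, Dz_fun_sum hsm, ← Finset.sum_add_distrib]
  congr 1
  refine Finset.sum_congr rfl fun p _ => ?_
  rw [Dz_fun_smul (differentiableAt_jetCoeff hΩ hσ hz hd p j)
    ((hit p.1 p.2).restrictScalars ℝ), Dz_iteratedDeriv hΩ (hσ p.2) p.1 hz]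

/-- Differentiating the orthogonality relations defining `jetPerp σ m`. -/
theorem inner_Dzbar_jetPerp (hΩ : IsOpen Ω) (hσ : ∀ i, DifferentiableOn ℂ (σ i) Ω)
    (hd : ∀ w ∈ Ω, (jGram σ m w).det ≠ 0) (hz : z ∈ Ω)
    {r : ℕ} (hr : r < m) (i j : Fin n) :
    ⟪iteratedDeriv r (σ i) z, Dzbar (jetPerp σ m j) z⟫ =
      -⟪iteratedDeriv (r + 1) (σ i) z, jetPerp σ m j z⟫ := by
  have h0 : (fun w => ⟪iteratedDeriv r (σ i) w, jetPerp σ m j w⟫) =ᶠ[nhds z] fun _ => 0 := by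
    filter_upwards [hΩ.mem_nhds hz] with w hw using inner_jetPerp_of_lt (hd w hw) hr i j
  have h := h0.Dzbar_eq
  rw [Dzbar_zero, Dzbar_inner ((differentiableAt_iteratedDeriv hΩ (hσ i) r hz).restrictScalars ℝ)
    (differentiableAt_jetPerp hΩ hσ hz (hd z hz) j), Dz_iteratedDeriv hΩ (hσ i) r hz] at h
  exact eq_neg_of_add_eq_zero_right h

theorem jetSchur_mul_mDzbar_jetTop (hΩ : IsOpen Ω) (hσ : ∀ i, DifferentiableOn ℂ (σ i) Ω)
    (hd : ∀ w ∈ Ω, (jGram σ m w).det ≠ 0)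
    (hd' : ∀ w ∈ Ω, (jGram σ (m + 1) w).det ≠ 0) (hz : z ∈ Ω) :
    jetSchur σ m z * mDzbar (jetTop σ m) z = jetSchur σ (m + 1) z := by
  ext i j
  have h : ⟪jetPerp σ m i z, Dzbar (jetPerp σ (m + 1) j) z⟫ = -jetSchur σ (m + 1) z i j := by
    rw [jetPerp, inner_sub_left, inner_Dzbar_jetPerp hΩ hσ hd' hz m.lt_succ_self, sum_inner,
      Finset.sum_eq_zero, sub_zero]
    · rfl
    · intro p _
      rw [inner_smul_left, inner_Dzbar_jetPerp hΩ hσ hd' hz (p.1.2.trans m.lt_succ_self),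
        inner_jetPerp_of_lt (hd' z hz) (Nat.succ_lt_succ p.1.2), neg_zero, mul_zero]
  rw [Dzbar_jetPerp hΩ hσ hz (hd' z hz), inner_neg_right, neg_inj,
    jetPerp_inner_sum_smul (hd z hz)] at h
  exact h

theorem mDz_jetSchur (hΩ : IsOpen Ω) (hσ : ∀ i, DifferentiableOn ℂ (σ i) Ω)
    (hd : ∀ w ∈ Ω, (jGram σ (m + 1) w).det ≠ 0)
    (hd' : (jGram σ (m + 2) z).det ≠ 0) (hz : z ∈ Ω) :
    mDz (jetSchur σ (m + 1)) z =
      jetSchur σ (m + 1) z * (jetTop σ (m + 1) z - jetTop σ m z) := by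
  ext i j
  have heq : (fun w => jetSchur σ (m + 1) w i j) =ᶠ[nhds z]
      fun w => ⟪jetPerp σ (m + 1) i w, jetPerp σ (m + 1) j w⟫ := by
    filter_upwards [hΩ.mem_nhds hz] with w hw using (inner_jetPerp_jetPerp (hd w hw) i j).symm
  have hdz := hd z hz
  have hzero (c : Fin (m + 1) × Fin n → ℂ) (j : Fin n) :
      ⟪∑ p, c p • iteratedDeriv p.1 (σ p.2) z, jetPerp σ (m + 1) j z⟫ = 0 := by
    rw [sum_inner]
    exact Finset.sum_eq_zero fun p _ => by
      rw [inner_smul_left, inner_jetPerp_of_lt hdz p.1.2, mul_zero]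
  have hzero' (c : Fin (m + 1) × Fin n → ℂ) :
      ⟪jetPerp σ (m + 1) i z, ∑ p, c p • iteratedDeriv p.1 (σ p.2) z⟫ = 0 := by
    rw [← inner_conj_symm, hzero, map_zero]
  have hnext : ⟪jetPerp σ (m + 1) i z, iteratedDeriv (m + 2) (σ j) z⟫ =
      ∑ l, jetSchur σ (m + 1) z i l * jetTop σ (m + 1) z l j := by
    have hperp : ⟪jetPerp σ (m + 1) i z, jetPerp σ (m + 2) j z⟫ = 0 := by
      nth_rw 1 [jetPerp]
      rw [inner_sub_left, inner_jetPerp_of_lt hd' (Nat.lt_succ_self _), zero_sub, neg_eq_zero,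
        sum_inner]
      refine Finset.sum_eq_zero fun p _ => ?_
      rw [inner_smul_left, inner_jetPerp_of_lt hd' (p.1.2.trans (Nat.lt_succ_self _)), mul_zero]
    rw [jetPerp.eq_def σ (m + 2), inner_sub_right, sub_eq_zero, jetPerp_inner_sum_smul hdz] at hperp
    exact hperp
  have hshift : ⟪jetPerp σ (m + 1) i z,
      ∑ p, jetCoeff σ (m + 1) z p j • iteratedDeriv (p.1 + 1) (σ p.2) z⟫ =
      ∑ l, jetSchur σ (m + 1) z i l * jetTop σ m z l j := by
    simp only [Fintype.sum_prod_type, Fin.sum_univ_castSucc, inner_add_right, inner_sum,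
      inner_smul_right, Fin.val_castSucc, Fin.val_last, jetPerp_inner_iteratedDeriv hdz]
    simp [jetPerp_inner_of_lt hdz, mul_comm, jetTop]
  have hdiff := fun j => differentiableAt_jetPerp hΩ hσ hz hdz j
  rw [mDz, Matrix.of_apply, heq.Dz_eq, Dz_inner (hdiff i) (hdiff j), Dzbar_jetPerp hΩ hσ hz hdz,
    inner_neg_left, hzero, neg_zero, zero_add, Dz_jetPerp hΩ hσ hz hdz, inner_sub_right,
    inner_add_right, hzero', zero_add, hshift, hnext, Matrix.mul_sub]
  rfl

end Calculus

end Jets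

/-- Trace formula for jet bundles: with `Q_k := (det J_{k−1}h)⁻¹·h_k` the metric of the
quotient `J_k(E)/J_{k−1}(E)` (conventions `det J_{−1}h := 1`, `h_0 := J_0 h` are automatic
here: `jGram σ 0` is the empty matrix, of determinant `1`),
`(trace⊗Id_{n×n})(𝒦_{J_k(E_f)}) − (trace⊗Id_{n×n})(𝒦_{J_{k−1}(E_f)})
  = 𝒦_{J_k(E_f)/J_{k−1}(E_f)}`, i.e.
`(det J_k h)⁻¹·det(J_{k−1}h)·h_k⁻¹·h_{k+1} − (det J_{k−1}h)⁻¹·det(J_{k−2}h)·h_{k−1}⁻¹·h_k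
  = ∂/∂z̄(Q_k⁻¹·∂Q_k/∂z)` on `Ω`. -/
theorem stmt17 {n : ℕ} (Ω : Set ℂ) (hΩ : IsOpen Ω) (k : ℕ) (hk : 1 ≤ k)
    (σ : Fin n → ℂ → H) (hσ : ∀ i, DifferentiableOn ℂ (σ i) Ω)
    (hnd : ∀ z ∈ Ω, LinearIndependent ℂ
      fun p : Fin (k + 2) × Fin n => iteratedDeriv (p.1 : ℕ) (σ p.2) z) :
    ∀ z ∈ Ω,
      (((jGram σ (k + 1) z).det)⁻¹ * (jGram σ k z).det) •
          ((hMat σ k z)⁻¹ * hMat σ (k + 1) z) -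
        (((jGram σ k z).det)⁻¹ * (jGram σ (k - 1) z).det) •
          ((hMat σ (k - 1) z)⁻¹ * hMat σ k z) =
      mDzbar (fun w =>
        (((jGram σ k w).det)⁻¹ • hMat σ k w)⁻¹ *
          mDz (fun u => ((jGram σ k u).det)⁻¹ • hMat σ k u) w) z := by
  intro z hz
  obtain ⟨m, rfl⟩ : ∃ m, k = m + 1 := ⟨k - 1, by omega⟩
  rw [Nat.add_sub_cancel]
  have hd0 : ∀ w ∈ Ω, (jGram σ m w).det ≠ 0 :=
    fun w hw => det_jGram_ne_zero_of_le (by omega) (hnd w hw)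
  have hd1 : ∀ w ∈ Ω, (jGram σ (m + 1) w).det ≠ 0 :=
    fun w hw => det_jGram_ne_zero_of_le (by omega) (hnd w hw)
  have hd2 : ∀ w ∈ Ω, (jGram σ (m + 2) w).det ≠ 0 :=
    fun w hw => det_jGram_ne_zero_of_le (by omega) (hnd w hw)
  have hQ : ∀ w ∈ Ω, (jGram σ (m + 1) w).det⁻¹ • hMat σ (m + 1) w = jetSchur σ (m + 1) w := by
    intro w hw
    rw [hMat_eq_smul_jetSchur (hd1 w hw), inv_smul_smul₀ (hd1 w hw)]
  have hconn : ∀ w ∈ Ω, ((jGram σ (m + 1) w).det⁻¹ • hMat σ (m + 1) w)⁻¹ *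
      mDz (fun u => (jGram σ (m + 1) u).det⁻¹ • hMat σ (m + 1) u) w =
        jetTop σ (m + 1) w - jetTop σ m w := by
    intro w hw
    have hmDz : mDz (fun u => (jGram σ (m + 1) u).det⁻¹ • hMat σ (m + 1) u) w =
        mDz (jetSchur σ (m + 1)) w := by
      ext i j
      refine Filter.EventuallyEq.Dz_eq ?_
      filter_upwards [hΩ.mem_nhds hw] with u hu
      rw [hQ u hu]
    rw [hmDz, hQ w hw, mDz_jetSchur hΩ hσ hd1 (hd2 w hw) hw,
      Matrix.nonsing_inv_mul_cancel_left _ _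
        (isUnit_iff_ne_zero.2 (det_jetSchur_ne_zero (hd1 w hw) (hd2 w hw)))]
  have hcurv : mDzbar (fun w => ((jGram σ (m + 1) w).det⁻¹ • hMat σ (m + 1) w)⁻¹ *
      mDz (fun u => (jGram σ (m + 1) u).det⁻¹ • hMat σ (m + 1) u) w) z =
        mDzbar (jetTop σ (m + 1)) z - mDzbar (jetTop σ m) z := by
    ext i j
    refine Eq.trans (Filter.EventuallyEq.Dzbar_eq ?_)
      (Dzbar_fun_sub (differentiableAt_jetCoeff hΩ hσ hz (hd2 z hz) (Fin.last (m + 1), i) j)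
        (differentiableAt_jetCoeff hΩ hσ hz (hd1 z hz) (Fin.last m, i) j))
    filter_upwards [hΩ.mem_nhds hz] with w hw
    rw [hconn w hw]
    rfl
  rw [smul_inv_hMat_mul_hMat_succ (hd1 z hz) (hd2 z hz),
    smul_inv_hMat_mul_hMat_succ (hd0 z hz) (hd1 z hz), hcurv,
    ← jetSchur_mul_mDzbar_jetTop hΩ hσ hd1 hd2 hz,
    Matrix.nonsing_inv_mul_cancel_left _ _
      (isUnit_iff_ne_zero.2 (det_jetSchur_ne_zero (hd1 z hz) (hd2 z hz)))]
  rw [← jetSchur_mul_mDzbar_jetTop hΩ hσ hd0 hd1 hz,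
    Matrix.nonsing_inv_mul_cancel_left _ _
      (isUnit_iff_ne_zero.2 (det_jetSchur_ne_zero (hd0 z hz) (hd1 z hz)))]
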